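/- For all reals 0 < c₁ < c₂ there exist θ > 0 and κ > 0 (depending only on c₁ and c₂) with the following property. Let p be a prime and A, B ⊆ 𝔽_p^* nonempty sets with |A| ≤ p^{1/2 − 1/400}, |B| ≤ p^{1/2 − 1/400}, and c₁·|B| ≤ |A| ≤ c₂·|B|. Define f(x,y) = xy(x + y). Then max( |f(A,B)|, |A·B| ) ≥ κ · |A|^{1 + θ}. -/

import Mathlib

open Pointwise

/-!
Suppose that `A * B` and the values of `xy(x + y) = x²y + xy²` are both few. By Plünnecke–Ruzsa all
sets `A ^ m * B ^ n` are then small. The pairs `(x²y, xy²)` form a graph between `A ^ 2 * B` and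
`A * B ^ 2`; it is dense, since `x³ = (x²y)² / (xy²)` makes the parametrization at most 3-to-1, and
the sums along its edges are few. Balog–Szemerédi–Gowers extracts a large `D ⊆ A ^ 2 * B` with
`D - D` small, while `D * D ⊆ A ^ 4 * B ^ 2` is small as well. This contradicts the sum-product
phenomenon.

For the sum-product estimate, small `D * D` provides a pivot `y ∈ D` for which `y • D ∩ a • D`, and
then `y • D - a • D`, is controlled for all `a` in a large `T ⊆ D`. Some quotient of differences
`ξ = (a - b) / (c - d)` of `T` makes `T + (ξ + 1) • T` nearly as large as possible, although its
dilate by `c - d` is covered by sums of a few `± a • D`, `± b • D`, `± c • D`, `± d • D`, which by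
Plünnecke–Ruzsa are small.
-/

section

open Finset

section BalogSzemerediGowers

section BipartiteGraph

variable {α β : Type*} [DecidableEq α] [DecidableEq β] (E : Finset (α × β))

/-- The neighbourhood of the right vertex `y` in the bipartite graph with edge set `E`. -/
def leftNeighbors (y : β) : Finset α := {x ∈ E.image Prod.fst | (x, y) ∈ E}

/-- The right vertices adjacent to both left vertices `x` and `x'` in the bipartite graph with
edge set `E`. -/
def commonNeighbors (x x' : α) : Finset β := {y ∈ E.image Prod.snd | (x, y) ∈ E ∧ (x', y) ∈ E}

variable {E}

lemma mem_leftNeighbors {x : α} {y : β} : x ∈ leftNeighbors E y ↔ (x, y) ∈ E := by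
  simp only [leftNeighbors, mem_filter, and_iff_right_iff_imp]
  exact mem_image_of_mem Prod.fst

lemma mem_commonNeighbors {x x' : α} {y : β} :
    y ∈ commonNeighbors E x x' ↔ (x, y) ∈ E ∧ (x', y) ∈ E := by
  simp only [commonNeighbors, mem_filter, and_iff_right_iff_imp]
  exact fun h => mem_image_of_mem Prod.snd h.1

lemma commonNeighbors_comm (x x' : α) : commonNeighbors E x x' = commonNeighbors E x' x := by
  ext y
  simp only [mem_commonNeighbors, and_comm]

lemma sum_card_leftNeighbors : ∑ y ∈ E.image Prod.snd, #(leftNeighbors E y) = #E := by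
  rw [card_eq_sum_card_image Prod.snd E]
  refine sum_congr rfl fun y _ => ?_
  refine card_bij' (fun x _ => (x, y)) (fun e _ => e.1) ?_ ?_ ?_ ?_ <;>
    simp only [mem_leftNeighbors, mem_filter, Prod.forall] <;> grind

lemma sum_card_filter_leftNeighbors_product (P : α × α → Prop) [DecidablePred P] :
    ∑ y ∈ E.image Prod.snd, #{q ∈ leftNeighbors E y ×ˢ leftNeighbors E y | P q} =
      ∑ q ∈ E.image Prod.fst ×ˢ E.image Prod.fst with P q, #(commonNeighbors E q.1 q.2) := by
  let r : β → α × α → Prop := fun y q => (q.1, y) ∈ E ∧ (q.2, y) ∈ E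
  convert sum_card_bipartiteAbove_eq_sum_card_bipartiteBelow r using 3 with y
  · ext q
    simp only [bipartiteAbove, mem_filter, mem_product, leftNeighbors, r]
    tauto
  · rfl

lemma cube_le_mul_sum_card_leftNeighbors_sq {M L : ℝ} (hM : 0 < M)
    (hY : #(E.image Prod.snd) ≤ M) (hE : M ^ 2 ≤ L * #E) :
    M ^ 3 ≤ L ^ 2 * ∑ y ∈ E.image Prod.snd, (#(leftNeighbors E y) : ℝ) ^ 2 := by
  set S := ∑ y ∈ E.image Prod.snd, (#(leftNeighbors E y) : ℝ) ^ 2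
  have hS : 0 ≤ S := sum_nonneg fun _ _ => sq_nonneg _
  have hcard : ∑ y ∈ E.image Prod.snd, (#(leftNeighbors E y) : ℝ) = #E := by
    exact_mod_cast sum_card_leftNeighbors
  have hcauchy : (#E : ℝ) ^ 2 ≤ #(E.image Prod.snd) * S := hcard ▸ sq_sum_le_card_mul_sum_sq
  refine le_of_mul_le_mul_left ?_ hM
  calc M * M ^ 3 = (M ^ 2) ^ 2 := by ring
    _ ≤ (L * #E) ^ 2 := by gcongr
    _ = L ^ 2 * #E ^ 2 := mul_pow _ _ _
    _ ≤ L ^ 2 * (#(E.image Prod.snd) * S) := by gcongr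
    _ ≤ L ^ 2 * (M * S) :=
      mul_le_mul_of_nonneg_left (mul_le_mul_of_nonneg_right hY hS) (sq_nonneg L)
    _ = _ := by ring

lemma sum_card_filter_card_commonNeighbors_lt_le {M τ : ℝ} (hX : #(E.image Prod.fst) ≤ M)
    (hτ : 0 ≤ τ) :
    ∑ y ∈ E.image Prod.snd,
      (#{q ∈ leftNeighbors E y ×ˢ leftNeighbors E y | (#(commonNeighbors E q.1 q.2) : ℝ) < τ} : ℝ) ≤
        M ^ 2 * τ := by
  set X := E.image Prod.fst
  set sparse : Finset (α × α) := {q ∈ X ×ˢ X | (#(commonNeighbors E q.1 q.2) : ℝ) < τ}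
  have hsparse : (#sparse : ℝ) ≤ M ^ 2 := by
    calc (#sparse : ℝ) ≤ #(X ×ˢ X) := by exact_mod_cast card_filter_le _ _
      _ = (#X : ℝ) ^ 2 := by rw [card_product, Nat.cast_mul, sq]
      _ ≤ M ^ 2 := by gcongr
  calc _ = ∑ q ∈ sparse, (#(commonNeighbors E q.1 q.2) : ℝ) := by
        exact_mod_cast sum_card_filter_leftNeighbors_product _
    _ ≤ ∑ _q ∈ sparse, τ := sum_le_sum fun q hq => (mem_filter.1 hq).2.le
    _ = #sparse * τ := by rw [sum_const, nsmul_eq_mul]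
    _ ≤ M ^ 2 * τ := by gcongr

/- Dependent random choice: `y` is found by averaging `|N(y)|² - 8 |sparse pairs in N(y)|`. -/
lemma exists_leftNeighbors_few_sparse_pairs {M L : ℝ} (hM : 0 < M) (hL : 0 < L)
    (hX : #(E.image Prod.fst) ≤ M) (hY : #(E.image Prod.snd) ≤ M) (hE : M ^ 2 ≤ L * #E) :
    ∃ y, M ≤ 2 * L * #(leftNeighbors E y) ∧
      8 * #{q ∈ leftNeighbors E y ×ˢ leftNeighbors E y |
        (#(commonNeighbors E q.1 q.2) : ℝ) < M / (16 * L ^ 2)} ≤ #(leftNeighbors E y) ^ 2 := by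
  set N := leftNeighbors E
  set sparse : β → Finset (α × α) := fun y =>
    {q ∈ N y ×ˢ N y | (#(commonNeighbors E q.1 q.2) : ℝ) < M / (16 * L ^ 2)}
  have hN : M ^ 3 / L ^ 2 ≤ ∑ y ∈ E.image Prod.snd, (#(N y) : ℝ) ^ 2 :=
    (div_le_iff₀' (by positivity)).2 (cube_le_mul_sum_card_leftNeighbors_sq hM hY hE)
  have hsparse : ∑ y ∈ E.image Prod.snd, (#(sparse y) : ℝ) ≤ M ^ 2 * (M / (16 * L ^ 2)) :=
    sum_card_filter_card_commonNeighbors_lt_le hX (by positivity)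
  have hE_ne : E.Nonempty := by
    by_contra! h
    rw [h, card_empty, Nat.cast_zero, mul_zero] at hE
    exact (pow_pos hM 2).not_ge hE
  obtain ⟨y, -, hy⟩ : ∃ y ∈ E.image Prod.snd,
      M ^ 2 / (2 * L ^ 2) ≤ (#(N y) : ℝ) ^ 2 - 8 * #(sparse y) := by
    refine exists_le_of_sum_le (hE_ne.image _) ?_
    rw [sum_sub_distrib, ← mul_sum, sum_const, nsmul_eq_mul]
    calc #(E.image Prod.snd) * (M ^ 2 / (2 * L ^ 2)) ≤ M * (M ^ 2 / (2 * L ^ 2)) := by gcongr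
      _ = M ^ 3 / L ^ 2 - 8 * (M ^ 2 * (M / (16 * L ^ 2))) := by field_simp; ring
      _ ≤ _ := by linarith
  have hmain : 0 ≤ M ^ 2 / (2 * L ^ 2) := by positivity
  refine ⟨y, ?_, ?_⟩
  · have hsq : M ^ 2 / (2 * L ^ 2) ≤ (#(N y) : ℝ) ^ 2 := by
      linarith [Nat.cast_nonneg (α := ℝ) #(sparse y)]
    rw [div_le_iff₀ (by positivity)] at hsq
    refine le_of_sq_le_sq ?_ (by positivity)
    nlinarith [sq_nonneg (L * #(N y))]
  · have : (8 * #(sparse y) : ℝ) ≤ (#(N y) : ℝ) ^ 2 := by linarith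
    exact_mod_cast this

end BipartiteGraph

lemma card_le_two_mul_card_filter_forall {α : Type*} (N : Finset α) (b : α → α → Prop)
    [DecidableRel b] (h : 8 * #{q ∈ N ×ˢ N | b q.1 q.2} ≤ #N ^ 2) :
    #N ≤ 2 * #{x ∈ N | 4 * #{z ∈ N | b x z} ≤ #N} := by
  set rich := {x ∈ N | ¬ 4 * #{z ∈ N | b x z} ≤ #N}
  have hpairs : #rich * #N ≤ 4 * #{q ∈ N ×ˢ N | b q.1 q.2} := by
    calc #rich * #N = ∑ _x ∈ rich, #N := by rw [sum_const, smul_eq_mul]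
      _ ≤ ∑ x ∈ rich, 4 * #{z ∈ N | b x z} :=
        sum_le_sum fun x hx => (not_le.1 (mem_filter.1 hx).2).le
      _ ≤ ∑ x ∈ N, 4 * #{z ∈ N | b x z} := sum_le_sum_of_subset (filter_subset _ _)
      _ = 4 * #{q ∈ N ×ˢ N | b q.1 q.2} := by
        simp only [card_filter, sum_product, mul_sum]
  have hsplit : #{x ∈ N | 4 * #{z ∈ N | b x z} ≤ #N} + #rich = #N :=
    card_filter_add_card_filter_not _
  nlinarith

lemma exists_subset_forall_card_filter_not {α : Type*} (N : Finset α)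
    (b : α → α → Prop) [DecidableRel b] (hb : ∀ x y, b x y → b y x)
    (h : 8 * #{q ∈ N ×ˢ N | b q.1 q.2} ≤ #N ^ 2) :
    ∃ N' ⊆ N, #N ≤ 2 * #N' ∧
      ∀ x ∈ N', ∀ y ∈ N', #N ≤ 2 * #{z ∈ N | ¬ b x z ∧ ¬ b z y} := by
  refine ⟨{x ∈ N | 4 * #{z ∈ N | b x z} ≤ #N}, filter_subset _ _,
    card_le_two_mul_card_filter_forall N b h, fun x hx y hy => ?_⟩
  classical
  have hcover : N ⊆ {z ∈ N | ¬ b x z ∧ ¬ b z y} ∪ ({z ∈ N | b x z} ∪ {z ∈ N | b y z}) := by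
    intro z hz
    have := hb z y
    simp only [mem_union, mem_filter]
    tauto
  have hcard := (card_le_card hcover).trans (card_union_le _ _)
  have hunion := card_union_le {z ∈ N | b x z} {z ∈ N | b y z}
  have hx' := (mem_filter.1 hx).2
  have hy' := (mem_filter.1 hy).2
  omega

lemma card_mul_le_card_of_forall_le_card_fiber {ι κ : Type*} [DecidableEq κ] (S : Finset κ)
    (T : Finset ι) (φ : ι → κ) {k : ℝ} (h : ∀ d ∈ S, k ≤ #{t ∈ T | φ t = d}) :
    #S * k ≤ #T := by
  calc #S * k = ∑ _d ∈ S, k := by rw [sum_const, nsmul_eq_mul]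
    _ ≤ ∑ d ∈ S, (#{t ∈ T | φ t = d} : ℝ) := sum_le_sum h
    _ = #{t ∈ T | φ t ∈ S} := by exact_mod_cast sum_card_fiberwise_eq_card_filter T S φ
    _ ≤ #T := by exact_mod_cast card_filter_le _ _

section AddCommGroup

variable {G : Type*} [AddCommGroup G] [DecidableEq G]

/- A path `x - y₁ - z - y₂ - x'` yields
`x - x' = (x + y₁) - (z + y₁) + (z + y₂) - (x' + y₂)`. -/
lemma sum_card_commonNeighbors_mul_le (E : Finset (G × G)) (N : Finset G) (x x' : G) :
    ∑ z ∈ N, #(commonNeighbors E x z) * #(commonNeighbors E z x') ≤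
      #{t ∈ Fintype.piFinset fun _ : Fin 4 => E.image fun e => e.1 + e.2 |
        t 0 - t 1 + t 2 - t 3 = x - x'} := by
  calc _ = #(N.sigma fun z => commonNeighbors E x z ×ˢ commonNeighbors E z x') := by
        simp only [card_sigma, card_product]
    _ ≤ _ := card_le_card_of_injOn
        (fun s => ![x + s.2.1, s.1 + s.2.1, s.1 + s.2.2, x' + s.2.2]) ?_ ?_
  · rintro ⟨z, y₁, y₂⟩ h
    simp only [coe_sigma, Set.mem_sigma_iff, mem_coe, mem_product, mem_commonNeighbors] at h
    obtain ⟨-, ⟨hxy₁, hzy₁⟩, hzy₂, hxy₂⟩ := h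
    have sum_mem {u v : G} (h : (u, v) ∈ E) : u + v ∈ E.image fun e => e.1 + e.2 :=
      mem_image_of_mem (fun e : G × G => e.1 + e.2) h
    simp only [coe_filter, Fintype.mem_piFinset, Fin.forall_fin_succ, Set.mem_ofPred_eq]
    refine ⟨⟨sum_mem hxy₁, sum_mem hzy₁, sum_mem hzy₂, sum_mem hxy₂, by simp⟩, ?_⟩
    simp only [Matrix.cons_val]
    abel
  · rintro ⟨z, y₁, y₂⟩ - ⟨w, v₁, v₂⟩ - h
    simp only [Matrix.vecCons_inj, add_right_inj] at h
    obtain ⟨rfl, hzw, -, rfl, -⟩ := h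
    obtain rfl := add_right_cancel hzw
    rfl

lemma card_mul_sq_le_card_filter_sub_add_sub (E : Finset (G × G)) (Z : Finset G) {x x' : G} {τ : ℝ}
    (hτ : 0 ≤ τ) (hx : ∀ z ∈ Z, τ ≤ #(commonNeighbors E x z))
    (hx' : ∀ z ∈ Z, τ ≤ #(commonNeighbors E z x')) :
    #Z * τ ^ 2 ≤ #{t ∈ Fintype.piFinset fun _ : Fin 4 => E.image fun e => e.1 + e.2 |
      t 0 - t 1 + t 2 - t 3 = x - x'} :=
  calc #Z * τ ^ 2 = ∑ _z ∈ Z, τ * τ := by rw [sum_const, nsmul_eq_mul, sq]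
    _ ≤ ∑ z ∈ Z, (#(commonNeighbors E x z) : ℝ) * #(commonNeighbors E z x') :=
      sum_le_sum fun z hz => mul_le_mul (hx z hz) (hx' z hz) hτ (Nat.cast_nonneg _)
    _ ≤ _ := by exact_mod_cast sum_card_commonNeighbors_mul_le E Z x x'

theorem balog_szemeredi_gowers (E : Finset (G × G)) {M L : ℝ} (hM : 0 < M) (hL : 0 < L)
    (hX : #(E.image Prod.fst) ≤ M) (hY : #(E.image Prod.snd) ≤ M)
    (hT : #(E.image fun e => e.1 + e.2) ≤ M) (hE : M ^ 2 ≤ L * #E) :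
    ∃ X ⊆ E.image Prod.fst, M ≤ 4 * L * #X ∧ #(X - X) ≤ 1024 * L ^ 5 * M := by
  set τ := M / (16 * L ^ 2)
  obtain ⟨y, hN, hsparse⟩ := exists_leftNeighbors_few_sparse_pairs hM hL hX hY hE
  set N := leftNeighbors E y
  obtain ⟨X, hXN, hNX, hpaths⟩ := exists_subset_forall_card_filter_not N
    (fun x z => (#(commonNeighbors E x z) : ℝ) < τ)
    (fun x z h => commonNeighbors_comm (E := E) x z ▸ h) hsparse
  have hNX' : (#N : ℝ) ≤ 2 * #X := by exact_mod_cast hNX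
  refine ⟨X, hXN.trans (filter_subset _ _), by nlinarith, ?_⟩
  set T := Fintype.piFinset fun _ : Fin 4 => E.image fun e => e.1 + e.2
  have hT4 : (#T : ℝ) ≤ M ^ 4 := by
    rw [Fintype.card_piFinset_const, Nat.cast_pow]
    gcongr
  have hrep : ∀ d ∈ X - X, M / (4 * L) * τ ^ 2 ≤ #{t ∈ T | t 0 - t 1 + t 2 - t 3 = d} := by
    intro d hd
    obtain ⟨x, hx, x', hx', rfl⟩ := mem_sub.1 hd
    set Z := {z ∈ N | ¬ (#(commonNeighbors E x z) : ℝ) < τ ∧ ¬ (#(commonNeighbors E z x') : ℝ) < τ}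
    have hZ : (#N : ℝ) ≤ 2 * #Z := by exact_mod_cast hpaths x hx x' hx'
    have hZ_le : M / (4 * L) ≤ #Z := by
      rw [div_le_iff₀ (by positivity)]
      nlinarith
    calc M / (4 * L) * τ ^ 2 ≤ #Z * τ ^ 2 := by gcongr
      _ ≤ _ := card_mul_sq_le_card_filter_sub_add_sub E Z (by positivity)
        (fun z hz => not_lt.1 (mem_filter.1 hz).2.1) fun z hz => not_lt.1 (mem_filter.1 hz).2.2
  have hcount := card_mul_le_card_of_forall_le_card_fiber (X - X) T _ hrep
  refine le_of_mul_le_mul_right (hcount.trans (hT4.trans_eq ?_))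
    (by positivity : 0 < M / (4 * L) * τ ^ 2)
  simp only [τ]
  field_simp
  norm_num

end AddCommGroup

end BalogSzemerediGowers

section SumProduct

open scoped Combinatorics.Additive

lemma card_sub_mul_card_inter_le {G : Type*} [AddGroup G] [DecidableEq G] (s t : Finset G) :
    #(s - t) * #(s ∩ t) ≤ #(s - s) * #(t - t) :=
  calc #(s - t) * #(s ∩ t) ≤ #(s - s ∩ t) * #(t - s ∩ t) :=
        ruzsa_triangle_inequality_sub_sub_sub s (s ∩ t) t
    _ ≤ #(s - s) * #(t - t) := by
      gcongr
      exacts [inter_subset_left, inter_subset_right]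

lemma sum_le_card_mul_add_card_filter_mul {ι : Type*} (s : Finset ι) (f : ι → ℝ) {M t : ℝ}
    (ht : 0 ≤ t) (hf : ∀ i ∈ s, f i ≤ M) :
    ∑ i ∈ s, f i ≤ #s * t + #{i ∈ s | t ≤ f i} * M := by
  calc ∑ i ∈ s, f i ≤ ∑ i ∈ s, (t + if t ≤ f i then M else 0) := by
        refine sum_le_sum fun i hi => ?_
        split_ifs with h
        · linarith [hf i hi]
        · linarith
    _ = #s * t + #{i ∈ s | t ≤ f i} * M := by
      rw [sum_add_distrib, sum_const, nsmul_eq_mul, ← sum_filter, sum_const, nsmul_eq_mul]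

variable {F : Type*} [Field F] [DecidableEq F]

lemma card_smul_sub_smul_self_le (a : F) (s : Finset F) : #(a • s - a • s) ≤ #(s - s) := by
  refine (card_le_card ?_).trans (card_smul_finset_le (a := a))
  simp only [sub_subset_iff, mem_smul_finset, forall_exists_index, and_imp]
  rintro _ x hx rfl _ y hy rfl
  exact ⟨x - y, sub_mem_sub hx hy, smul_sub a x y⟩

lemma card_smul_sub_smul_mul_card_inter_le (a b : F) (s : Finset F) :
    #(a • s - b • s) * #(a • s ∩ b • s) ≤ #(s - s) ^ 2 :=
  calc _ ≤ #(a • s - a • s) * #(b • s - b • s) := card_sub_mul_card_inter_le _ _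
    _ ≤ #(s - s) * #(s - s) :=
      Nat.mul_le_mul (card_smul_sub_smul_self_le a s) (card_smul_sub_smul_self_le b s)
    _ = #(s - s) ^ 2 := (sq _).symm

lemma mulEnergy_eq_sum_card_smul_inter {s : Finset F} (hs : 0 ∉ s) (t : Finset F) :
    Eₘ[s, t] = ∑ a ∈ s, ∑ b ∈ s, #(a • t ∩ b • t) := by
  rw [mulEnergy, card_filter, sum_product, sum_product]
  refine sum_congr rfl fun a ha => sum_congr rfl fun b hb => ?_
  have ha0 : a ≠ 0 := ne_of_mem_of_not_mem ha hs
  have hb0 : b ≠ 0 := ne_of_mem_of_not_mem hb hs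
  rw [← card_filter]
  refine card_bij' (fun q _ => a * q.1) (fun x _ => (x / a, x / b)) ?_ ?_ ?_ ?_
  · grind [mem_smul_finset, smul_eq_mul]
  · grind [mem_smul_finset, smul_eq_mul]
  · grind
  · grind

lemma exists_forall_le_card_smul_inter {s : Finset F} (hs : s.Nonempty) (hs0 : 0 ∉ s) {K : ℝ}
    (hK : 0 < K) (hss : #(s * s) ≤ K * #s) :
    ∃ b ∈ s, ∃ t ⊆ s, #s ≤ 2 * K * #t ∧ ∀ a ∈ t, #s ≤ 2 * K * #(a • s ∩ b • s) := by
  have hcard : (0 : ℝ) < #s := by exact_mod_cast hs.card_pos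
  have henergy : (#s : ℝ) ^ 3 ≤ K * Eₘ[s, s] := by
    have h : (#s : ℝ) ^ 2 * #s ^ 2 ≤ #(s * s) * Eₘ[s, s] := by
      exact_mod_cast le_card_mul_mul_mulEnergy s s
    refine le_of_mul_le_mul_left ?_ hcard
    calc (#s : ℝ) * #s ^ 3 = #s ^ 2 * #s ^ 2 := by ring
      _ ≤ (#(s * s) : ℝ) * (Eₘ[s, s] : ℝ) := h
      _ ≤ K * #s * (Eₘ[s, s] : ℝ) := by gcongr
      _ = _ := by ring
  obtain ⟨b, hb, hsum⟩ : ∃ b ∈ s, (#s : ℝ) ^ 2 / K ≤ ∑ a ∈ s, (#(a • s ∩ b • s) : ℝ) := by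
    refine exists_le_of_sum_le hs ?_
    rw [sum_const, nsmul_eq_mul, sum_comm]
    calc #s * ((#s : ℝ) ^ 2 / K) = #s ^ 3 / K := by ring
      _ ≤ (Eₘ[s, s] : ℝ) := (div_le_iff₀' hK).2 henergy
      _ = _ := by exact_mod_cast mulEnergy_eq_sum_card_smul_inter hs0 s
  set t := {a ∈ s | (#s : ℝ) / (2 * K) ≤ #(a • s ∩ b • s)}
  have hpopular : ∑ a ∈ s, (#(a • s ∩ b • s) : ℝ) ≤ #s * (#s / (2 * K)) + #t * #s := by
    refine sum_le_card_mul_add_card_filter_mul s _ (by positivity) fun a _ => ?_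
    have h : #(a • s ∩ b • s) ≤ #s := (card_le_card inter_subset_left).trans card_smul_finset_le
    exact_mod_cast h
  refine ⟨b, hb, t, filter_subset _ _, ?_, fun a ha =>
    (div_le_iff₀' (by positivity)).1 (mem_filter.1 ha).2⟩
  have hhalf : (#s : ℝ) ^ 2 / K = #s * (#s / (2 * K)) + #s * (#s / (2 * K)) := by
    field_simp
    norm_num
  rw [← div_le_iff₀' (by positivity)]
  refine le_of_mul_le_mul_left ?_ hcard
  linarith

lemma addEnergy_smul_le {ξ : F} (hξ : ξ ≠ 0) (s t : Finset F) :
    E[s, ξ • t] ≤ #s * #t +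
      #{q ∈ (s ×ˢ s) ×ˢ t ×ˢ t | (q.1.1 - q.1.2) / (q.2.2 - q.2.1) = ξ} := by
  set collisions := {q ∈ (s ×ˢ s) ×ˢ t ×ˢ t | q.1.1 + ξ * q.2.1 = q.1.2 + ξ * q.2.2}
  have hE : E[s, ξ • t] = #collisions := by
    refine card_bij' (fun q _ => (q.1, q.2.1 / ξ, q.2.2 / ξ))
      (fun q _ => (q.1, ξ * q.2.1, ξ * q.2.2)) ?_ ?_ ?_ ?_ <;>
    grind [mem_smul_finset, smul_eq_mul]
  have hdiag : #{q ∈ collisions | q.2.1 = q.2.2} ≤ #(s ×ˢ t) :=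
    card_le_card_of_injOn (fun q => (q.1.1, q.2.1)) (fun q hq => by grind) (fun q hq => by grind)
  rw [hE, ← card_filter_add_card_filter_not (fun q : (F × F) × F × F => q.2.1 = q.2.2),
    ← card_product]
  gcongr
  intro q hq
  grind

lemma sum_addEnergy_smul_le {Ξ : Finset F} (hΞ : 0 ∉ Ξ) (s t : Finset F) :
    ∑ ξ ∈ Ξ, E[s, ξ • t] ≤ #Ξ * (#s * #t) + (#s * #t) ^ 2 := by
  set slope : (F × F) × F × F → F := fun q => (q.1.1 - q.1.2) / (q.2.2 - q.2.1)
  calc ∑ ξ ∈ Ξ, E[s, ξ • t] ≤ ∑ ξ ∈ Ξ, (#s * #t + #{q ∈ (s ×ˢ s) ×ˢ t ×ˢ t | slope q = ξ}) :=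
        sum_le_sum fun ξ hξ => addEnergy_smul_le (ne_of_mem_of_not_mem hξ hΞ) s t
    _ = #Ξ * (#s * #t) + #{q ∈ (s ×ˢ s) ×ˢ t ×ˢ t | slope q ∈ Ξ} := by
      rw [sum_add_distrib, sum_const, smul_eq_mul, sum_card_fiberwise_eq_card_filter]
    _ ≤ #Ξ * (#s * #t) + #((s ×ˢ s) ×ˢ t ×ˢ t) := by
      gcongr
      exact filter_subset _ _
    _ = _ := by
      simp only [card_product]
      ring

lemma exists_card_mul_card_le_card_add_smul {Ξ : Finset F} (hΞ : Ξ.Nonempty) (hΞ0 : 0 ∉ Ξ)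
    {s t : Finset F} {L : ℝ} (hL : #s * #t ≤ L * #Ξ) :
    ∃ ξ ∈ Ξ, #s * #t ≤ (1 + L) * #(s + ξ • t) := by
  have hcard : (0 : ℝ) < #Ξ := by exact_mod_cast hΞ.card_pos
  obtain ⟨ξ, hξ, hE⟩ : ∃ ξ ∈ Ξ, (E[s, ξ • t] : ℝ) ≤ (1 + L) * (#s * #t) := by
    refine exists_le_of_sum_le hΞ ?_
    rw [sum_const, nsmul_eq_mul]
    calc ∑ ξ ∈ Ξ, (E[s, ξ • t] : ℝ) ≤ #Ξ * (#s * #t) + (#s * #t) ^ 2 := by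
          exact_mod_cast sum_addEnergy_smul_le hΞ0 s t
      _ ≤ #Ξ * (#s * #t) + L * #Ξ * (#s * #t) := by
        rw [sq]
        gcongr
      _ = _ := by ring
  refine ⟨ξ, hξ, ?_⟩
  rcases (by positivity : (0 : ℝ) ≤ #s * #t).eq_or_lt with h0 | hpos
  · rw [← h0] at hL ⊢
    have : 0 ≤ L := nonneg_of_mul_nonneg_left hL hcard
    positivity
  have hcauchy : (#s : ℝ) ^ 2 * #t ^ 2 ≤ #(s + ξ • t) * E[s, ξ • t] := by
    have h := le_card_add_mul_addEnergy s (ξ • t)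
    rw [card_smul_finset₀ (ne_of_mem_of_not_mem hξ hΞ0)] at h
    exact_mod_cast h
  refine le_of_mul_le_mul_right ?_ hpos
  calc (#s * #t : ℝ) * (#s * #t) = #s ^ 2 * #t ^ 2 := by ring
    _ ≤ #(s + ξ • t) * E[s, ξ • t] := hcauchy
    _ ≤ #(s + ξ • t) * ((1 + L) * (#s * #t)) := by gcongr
    _ = _ := by ring

lemma card_add_smul_of_notMem_sub_div_sub {s t : Finset F} {ξ : F}
    (hξ : ξ ∉ (s - s) / (t - t)) : #(s + ξ • t) = #s * #t := by
  have himage : s + ξ • t = (s ×ˢ t).image fun q => q.1 + ξ * q.2 := by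
    ext x
    simp only [mem_add, mem_smul_finset, mem_image, mem_product, Prod.exists, smul_eq_mul]
    grind
  rw [himage, card_image_of_injOn, card_product]
  rintro ⟨a, b⟩ hab ⟨a', b'⟩ hab' h
  simp only [coe_product, Set.mem_prod, mem_coe] at hab hab' h
  have hb : b' = b := by
    by_contra hb
    refine hξ (mem_div.2 ⟨a - a', sub_mem_sub hab.1 hab'.1, b' - b, sub_mem_sub hab'.2 hab.2, ?_⟩)
    rw [div_eq_iff (sub_ne_zero.2 hb)]
    linear_combination h
  subst hb
  rw [add_right_cancel h]

lemma exists_mul_sub_eq_sub_of_mem_sub_div_sub {s : Finset F} (hs : s.Nontrivial) {ξ : F}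
    (hξ : ξ ∈ (s - s) / (s - s)) :
    ∃ a ∈ s, ∃ b ∈ s, ∃ c ∈ s, ∃ d ∈ s, c ≠ d ∧ ξ * (c - d) = a - b := by
  obtain ⟨_, hx, _, hy, rfl⟩ := mem_div.1 hξ
  obtain ⟨a, ha, b, hb, rfl⟩ := mem_sub.1 hx
  obtain ⟨c, hc, d, hd, rfl⟩ := mem_sub.1 hy
  rcases eq_or_ne c d with rfl | hcd
  · obtain ⟨u, hu, v, hv, huv⟩ := hs
    exact ⟨u, hu, u, hu, u, hu, v, hv, huv, by simp⟩
  · exact ⟨a, ha, b, hb, c, hc, d, hd, hcd, div_mul_cancel₀ _ (sub_ne_zero.2 hcd)⟩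

/- If all of `0, …, N - 1` are quotients of differences of `s`, average over `ξ + 1 ∈ {1, …, N}`;
otherwise some `n` is such a quotient and `n + 1` is not: take `ξ = n`. -/
lemma exists_mem_sub_div_sub_card_sq_le {s : Finset F} (hs : s.Nonempty) {N : ℕ} {L : ℝ}
    (hN : Set.InjOn (Nat.cast : ℕ → F) (Set.Iic N)) (hL : (#s : ℝ) ^ 2 ≤ L * N) :
    ∃ ξ ∈ (s - s) / (s - s), (#s : ℝ) ^ 2 ≤ (1 + L) * #(s + (ξ + 1) • s) := by
  have hLN : 0 < L * N := (by positivity : (0 : ℝ) < (#s : ℝ) ^ 2).trans_le hL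
  have hN0 : 0 < N := Nat.pos_of_ne_zero fun h => by simp [h] at hLN
  have hL0 : 0 < L := pos_of_mul_pos_left hLN N.cast_nonneg
  have hzero : ((0 : ℕ) : F) ∈ (s - s) / (s - s) := by
    obtain ⟨a, ha⟩ := hs
    have h0 : (0 : F) ∈ s - s := mem_sub.2 ⟨a, ha, a, ha, sub_self a⟩
    exact mem_div.2 ⟨0, h0, 0, h0, by simp⟩
  by_cases hall : ∀ n < N, (n : F) ∈ (s - s) / (s - s)
  · set Ξ : Finset F := (Icc 1 N).image Nat.cast
    have hΞ_card : #Ξ = N := by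
      rw [card_image_of_injOn (hN.mono fun n hn => (mem_Icc.1 hn).2), Nat.card_Icc,
        Nat.add_sub_cancel]
    have hΞ0 : (0 : F) ∉ Ξ := by
      intro h
      obtain ⟨n, hn, hn0⟩ := mem_image.1 h
      have := hN (mem_Icc.1 hn).2 (Nat.zero_le N) (hn0.trans Nat.cast_zero.symm)
      exact Nat.one_le_iff_ne_zero.1 (mem_Icc.1 hn).1 this
    obtain ⟨_, hξ, hgrowth⟩ := exists_card_mul_card_le_card_add_smul (s := s) (t := s)
      (card_pos.1 (hΞ_card ▸ hN0)) hΞ0 (by rwa [hΞ_card, ← sq])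
    obtain ⟨n, hn, rfl⟩ := mem_image.1 hξ
    obtain ⟨m, rfl⟩ := Nat.exists_eq_add_of_le' (mem_Icc.1 hn).1
    exact ⟨m, hall m (mem_Icc.1 hn).2, by rwa [sq, ← Nat.cast_succ]⟩
  · push Not at hall
    obtain ⟨n, -, hn⟩ := hall
    obtain ⟨m, hm, hm'⟩ : ∃ m : ℕ, (m : F) ∈ (s - s) / (s - s) ∧
        ((m + 1 : ℕ) : F) ∉ (s - s) / (s - s) := by
      by_contra! hstep
      exact hn (Nat.rec hzero hstep n)
    refine ⟨m, hm, ?_⟩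
    rw [← Nat.cast_succ, card_add_smul_of_notMem_sub_div_sub hm', Nat.cast_mul, ← sq]
    nlinarith [sq_nonneg (#s : ℝ)]

lemma smul_add_smul_subset_nsmul_sub_nsmul {s t : Finset F} (hst : s ⊆ t) {a b c d ξ : F}
    (hξ : ξ * (c - d) = a - b) :
    (c - d) • (s + (ξ + 1) • s) ⊆
      3 • (a • t ∪ b • t ∪ (c • t ∪ d • t)) - 3 • (a • t ∪ b • t ∪ (c • t ∪ d • t)) := by
  set C := a • t ∪ b • t ∪ (c • t ∪ d • t)
  have mem_C : ∀ w ∈ s, a * w ∈ C ∧ b * w ∈ C ∧ c * w ∈ C ∧ d * w ∈ C := by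
    intro w hw
    have hmem (z : F) : z * w ∈ z • t := smul_mem_smul_finset (hst hw)
    simp only [C, mem_union]
    exact ⟨.inl (.inl (hmem a)), .inl (.inr (hmem b)), .inr (.inl (hmem c)), .inr (.inr (hmem d))⟩
  intro x hx
  obtain ⟨_, hy, rfl⟩ := mem_smul_finset.1 hx
  obtain ⟨u, hu, _, hw, rfl⟩ := mem_add.1 hy
  obtain ⟨v, hv, rfl⟩ := mem_smul_finset.1 hw
  obtain ⟨-, -, hcu, hdu⟩ := mem_C u hu
  obtain ⟨hav, hbv, hcv, hdv⟩ := mem_C v hv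
  have hsplit : (c - d) • (u + (ξ + 1) • v) =
      (c * u + a * v + c * v) - (d * u + b * v + d * v) := by
    simp only [smul_eq_mul]
    linear_combination v * hξ
  rw [hsplit, succ_nsmul, two_nsmul]
  exact sub_mem_sub (add_mem_add (add_mem_add hcu hav) hcv) (add_mem_add (add_mem_add hdu hbv) hdv)

lemma card_add_smul_le_of_forall_card_smul_sub_le {s t : Finset F} (hst : s ⊆ t)
    (ht : t.Nonempty) {y : F} (hy : y ≠ 0) {R : ℝ}
    (hR : ∀ a ∈ s, #(y • t - a • t) ≤ R * #t) {a b c d ξ : F} (ha : a ∈ s) (hb : b ∈ s)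
    (hc : c ∈ s) (hd : d ∈ s) (hcd : c ≠ d) (hξ : ξ * (c - d) = a - b) :
    #(s + (ξ + 1) • s) ≤ (4 * R) ^ 6 * #t := by
  set C := a • t ∪ b • t ∪ (c • t ∪ d • t)
  have hyt : (y • t).Nonempty := ht.smul_finset
  have hcard : (0 : ℝ) < #(y • t) := by exact_mod_cast hyt.card_pos
  have hyC : (#(y • t - C) : ℝ) ≤ 4 * R * #(y • t) := by
    have hunion : #(y • t - C) ≤ #(y • t - a • t) + #(y • t - b • t) +
        (#(y • t - c • t) + #(y • t - d • t)) := by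
      simp only [C, sub_union]
      exact (card_union_le _ _).trans (add_le_add (card_union_le _ _) (card_union_le _ _))
    calc (#(y • t - C) : ℝ) ≤ #(y • t - a • t) + #(y • t - b • t) +
          (#(y • t - c • t) + #(y • t - d • t)) := by exact_mod_cast hunion
      _ ≤ R * #t + R * #t + (R * #t + R * #t) := by
        gcongr
        exacts [hR a ha, hR b hb, hR c hc, hR d hd]
      _ = 4 * R * #(y • t) := by
        rw [card_smul_finset₀ hy]
        ring
  have hplunnecke := (NNRat.cast_le (K := ℝ)).2
    (pluennecke_ruzsa_inequality_nsmul_sub_nsmul_sub hyt C 3 3)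
  push_cast at hplunnecke
  calc (#(s + (ξ + 1) • s) : ℝ) = #((c - d) • (s + (ξ + 1) • s)) := by
        rw [card_smul_finset₀ (sub_ne_zero.2 hcd)]
    _ ≤ #(3 • C - 3 • C) := by
      exact_mod_cast card_le_card (smul_add_smul_subset_nsmul_sub_nsmul hst hξ)
    _ ≤ (#(y • t - C) / #(y • t) : ℝ) ^ 6 * #(y • t) := hplunnecke
    _ ≤ (4 * R) ^ 6 * #(y • t) := by
      gcongr
      rwa [div_le_iff₀ hcard]
    _ = _ := by rw [card_smul_finset₀ hy]

lemma card_smul_sub_smul_le {s : Finset F} (hs : s.Nonempty) {a b : F} {K H : ℝ}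
    (hK : 0 < K) (hab : #s ≤ 2 * K * #(a • s ∩ b • s)) (hss : #(s - s) ≤ H * #s) :
    #(a • s - b • s) ≤ 2 * K * H ^ 2 * #s := by
  have hcard : (0 : ℝ) < #s := by exact_mod_cast hs.card_pos
  have hinter : (#(a • s - b • s) * #(a • s ∩ b • s) : ℝ) ≤ #(s - s) ^ 2 := by
    exact_mod_cast card_smul_sub_smul_mul_card_inter_le a b s
  refine le_of_mul_le_mul_right ?_ hcard
  calc (#(a • s - b • s) : ℝ) * #s ≤ #(a • s - b • s) * (2 * K * #(a • s ∩ b • s)) := by gcongr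
    _ = 2 * K * (#(a • s - b • s) * #(a • s ∩ b • s)) := by ring
    _ ≤ 2 * K * (H * #s) ^ 2 := by
      gcongr
      exact hinter.trans (by gcongr)
    _ = _ := by ring

theorem card_le_of_card_mul_self_le_of_card_sub_self_le {s : Finset F} (hs : s.Nonempty)
    (hs0 : 0 ∉ s) {N : ℕ} (hN : Set.InjOn (Nat.cast : ℕ → F) (Set.Iic N)) {K H L : ℝ}
    (hmul : #(s * s) ≤ K * #s) (hsub : #(s - s) ≤ H * #s) (hL : (#s : ℝ) ^ 2 ≤ L * N) :
    #s ≤ 2 ^ 20 * (1 + L) * K ^ 8 * H ^ 12 := by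
  have hcard : (0 : ℝ) < #s := by exact_mod_cast hs.card_pos
  have hK : 1 ≤ K :=
    one_le_of_le_mul_right₀ hcard ((Nat.cast_le.2 card_le_card_mul_self₀).trans hmul)
  have hH : 1 ≤ H :=
    one_le_of_le_mul_right₀ hcard ((Nat.cast_le.2 card_le_card_sub_self).trans hsub)
  have hL0 : 0 ≤ L := by
    by_contra! h
    nlinarith [N.cast_nonneg (α := ℝ), pow_pos hcard 2]
  obtain ⟨y, hy, t, hts, ht, hpopular⟩ :=
    exists_forall_le_card_smul_inter hs hs0 (by linarith) hmul
  rcases le_or_gt #t 1 with ht1 | ht1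
  · calc (#s : ℝ) ≤ 2 * K * #t := ht
      _ ≤ 2 * K * 1 := by
        gcongr
        exact_mod_cast ht1
      _ ≤ 2 ^ 20 * (1 + 0) * K ^ 8 * 1 ^ 12 := by nlinarith [le_self_pow₀ hK (n := 8) (by norm_num)]
      _ ≤ _ := by gcongr
  rw [one_lt_card_iff_nontrivial] at ht1
  have hR : ∀ a ∈ t, #(y • s - a • s) ≤ 2 * K * H ^ 2 * #s := fun a ha =>
    card_smul_sub_smul_le hs (by linarith) (inter_comm (a • s) (y • s) ▸ hpopular a ha) hsub
  have htN : (#t : ℝ) ^ 2 ≤ L * N := le_trans (by gcongr) hL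
  obtain ⟨ξ, hξ, hgrowth⟩ := exists_mem_sub_div_sub_card_sq_le ht1.nonempty hN htN
  obtain ⟨a, ha, b, hb, c, hc, d, hd, hcd, hξ_eq⟩ :=
    exists_mul_sub_eq_sub_of_mem_sub_div_sub ht1 hξ
  have hupper := card_add_smul_le_of_forall_card_smul_sub_le hts hs
    (ne_of_mem_of_not_mem hy hs0) hR ha hb hc hd hcd hξ_eq
  refine le_of_mul_le_mul_right ?_ hcard
  calc (#s * #s : ℝ) ≤ (2 * K * #t) * (2 * K * #t) := by gcongr
    _ = 4 * K ^ 2 * #t ^ 2 := by ring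
    _ ≤ 4 * K ^ 2 * ((1 + L) * ((4 * (2 * K * H ^ 2)) ^ 6 * #s)) := by
      gcongr
      exact hgrowth.trans (by gcongr)
    _ = _ := by ring

end SumProduct

section GrowthOfPowers

variable {G : Type*} [CommGroup G] [DecidableEq G] {A B : Finset G} {K : ℝ}

lemma card_pow_le_of_card_mul_le (hA : A.Nonempty) (hK : #(A * B) ≤ K * #A) (n : ℕ) :
    #(B ^ n) ≤ K ^ n * #A := by
  have hplunnecke := (NNRat.cast_le (K := ℝ)).2 (pluennecke_ruzsa_inequality_pow_mul hA B n)
  push_cast at hplunnecke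
  refine hplunnecke.trans ?_
  gcongr
  rwa [div_le_iff₀ (by exact_mod_cast hA.card_pos)]

lemma card_pow_mul_pow_le (hA : A.Nonempty) (hB : B.Nonempty) (hKA : #(A * B) ≤ K * #A)
    (hKB : #(A * B) ≤ K * #B) (m n : ℕ) : #(A ^ m * B ^ n) ≤ K ^ (m + n + 4) * #A := by
  have hA_pos : (0 : ℝ) < #A := by exact_mod_cast hA.card_pos
  have hB_pos : (0 : ℝ) < #B := by exact_mod_cast hB.card_pos
  have hK : 0 ≤ K := nonneg_of_mul_nonneg_left ((Nat.cast_nonneg _).trans hKA) hA_pos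
  have hBA : #B ≤ K * #A := le_trans (by exact_mod_cast card_le_card_mul_left hA) hKA
  have hApow : #(A ^ (m + 1)) ≤ K ^ (m + 2) * #A :=
    calc (#(A ^ (m + 1)) : ℝ) ≤ K ^ (m + 1) * #B :=
          card_pow_le_of_card_mul_le hB (by rwa [mul_comm B A]) (m + 1)
      _ ≤ K ^ (m + 1) * (K * #A) := by gcongr
      _ = _ := by ring
  have hABpow : #(A * B ^ n) ≤ K ^ (n + 2) * #A := by
    refine le_of_mul_le_mul_right ?_ hB_pos
    calc (#(A * B ^ n) : ℝ) * #B ≤ #(A * B) * #(B * B ^ n) := by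
          exact_mod_cast ruzsa_triangle_inequality_mul_mul_mul A B (B ^ n)
      _ ≤ (K * #B) * (K ^ (n + 1) * #A) := by
        rw [← pow_succ']
        gcongr
        exact card_pow_le_of_card_mul_le hA hKA (n + 1)
      _ = _ := by ring
  refine le_of_mul_le_mul_right ?_ hA_pos
  calc (#(A ^ m * B ^ n) : ℝ) * #A ≤ #(A ^ m * A) * #(A * B ^ n) := by
        exact_mod_cast ruzsa_triangle_inequality_mul_mul_mul (A ^ m) A (B ^ n)
    _ ≤ (K ^ (m + 2) * #A) * (K ^ (n + 2) * #A) := by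
      rw [← pow_succ]
      gcongr
    _ = _ := by ring

lemma exists_image_units_val_eq {M : Type*} [GroupWithZero M] [DecidableEq M] {s : Finset M}
    (hs : 0 ∉ s) : ∃ t : Finset Mˣ, t.image (Units.coeHom M) = s := by
  have h : (s : Set M) ⊆ Units.coeHom M '' Set.univ := fun a ha =>
    ⟨Units.mk0 a (ne_of_mem_of_not_mem ha hs), trivial, rfl⟩
  classical
  obtain ⟨t, -, ht⟩ := subset_set_image_iff.1 h
  exact ⟨t, ht⟩

lemma card_pow_mul_pow_le₀ {M : Type*} [CommGroupWithZero M] [DecidableEq M] {A B : Finset M}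
    (hA : A.Nonempty) (hB : B.Nonempty) (hA0 : 0 ∉ A) (hB0 : 0 ∉ B) {K : ℝ}
    (hKA : #(A * B) ≤ K * #A) (hKB : #(A * B) ≤ K * #B) (m n : ℕ) :
    #(A ^ m * B ^ n) ≤ K ^ (m + n + 4) * #A := by
  classical
  have hinj : Function.Injective (Units.coeHom M) := Units.val_injective
  obtain ⟨A, rfl⟩ := exists_image_units_val_eq hA0
  obtain ⟨B, rfl⟩ := exists_image_units_val_eq hB0
  simp only [← image_mul, ← image_pow, card_image_of_injective _ hinj] at hKA hKB ⊢
  exact card_pow_mul_pow_le (image_nonempty.1 hA) (image_nonempty.1 hB) hKA hKB m n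

end GrowthOfPowers

section BinaryCubic

variable {F : Type*} [Field F] [DecidableEq F] {A B : Finset F}

/-- The bipartite graph on `F` with an edge from `x²y` to `xy²` for each `x ∈ A` and `y ∈ B`. It is
set up so that the ends of an edge sum to `xy(x + y)`. -/
def monomialGraph (A B : Finset F) : Finset (F × F) :=
  (A ×ˢ B).image fun q => (q.1 ^ 2 * q.2, q.1 * q.2 ^ 2)

lemma image_fst_monomialGraph_subset : (monomialGraph A B).image Prod.fst ⊆ A ^ 2 * B := by
  simp only [monomialGraph, image_image, image_subset_iff, mem_product]
  exact fun q hq => mul_mem_mul (pow_mem_pow hq.1) hq.2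

lemma image_snd_monomialGraph_subset : (monomialGraph A B).image Prod.snd ⊆ A * B ^ 2 := by
  simp only [monomialGraph, image_image, image_subset_iff, mem_product]
  exact fun q hq => mul_mem_mul hq.1 (pow_mem_pow hq.2)

lemma image_add_monomialGraph_subset :
    (monomialGraph A B).image (fun e => e.1 + e.2) ⊆ image₂ (fun x y => x * y * (x + y)) A B := by
  simp only [monomialGraph, image_image, image_subset_iff, mem_product]
  exact fun q hq => mem_image₂.2 ⟨q.1, hq.1, q.2, hq.2, by simp only [Function.comp_apply]; ring⟩

/- An edge `(u, v)` determines `x` up to a cube root of unity, since `x³ = u² / v`. -/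
lemma card_mul_card_le_three_mul_card_monomialGraph (hA : 0 ∉ A) (hB : 0 ∉ B) :
    #A * #B ≤ 3 * #(monomialGraph A B) := by
  rw [← card_product]
  refine card_le_mul_card_image _ _ ?_
  rintro ⟨u, v⟩ -
  calc _ ≤ #(Polynomial.nthRoots 3 (u ^ 2 / v)).toFinset :=
        card_le_card_of_injOn Prod.fst ?_ ?_
    _ ≤ 3 := (Multiset.toFinset_card_le _).trans (Polynomial.card_nthRoots _ _)
  · rintro ⟨x, y⟩ h
    simp only [coe_filter, mem_product, Set.mem_ofPred_eq, Prod.mk.injEq] at h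
    obtain ⟨⟨hx, hy⟩, rfl, rfl⟩ := h
    have hx0 : x ≠ 0 := ne_of_mem_of_not_mem hx hA
    have hy0 : y ≠ 0 := ne_of_mem_of_not_mem hy hB
    rw [mem_coe, Multiset.mem_toFinset, Polynomial.mem_nthRoots (by norm_num)]
    field_simp
  · rintro ⟨x, y⟩ h ⟨x', y'⟩ h' hxx'
    simp only [coe_filter, mem_product, Set.mem_ofPred_eq, Prod.mk.injEq] at h h' hxx'
    subst hxx'
    have hx0 : x ^ 2 ≠ 0 := pow_ne_zero 2 (ne_of_mem_of_not_mem h.1.1 hA)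
    rw [mul_left_cancel₀ hx0 (h.2.1.trans h'.2.1.symm)]

section SmallCubicImage

variable {K : ℝ}

lemma sq_le_mul_card_monomialGraph (hA0 : 0 ∉ A) (hB0 : 0 ∉ B) (hK : 2 ≤ K)
    (hAB : #A ≤ K * #B) : (K ^ 7 * #A) ^ 2 ≤ K ^ 17 * #(monomialGraph A B) :=
  have hgraph : (#A * #B : ℝ) ≤ 3 * #(monomialGraph A B) := by
    exact_mod_cast card_mul_card_le_three_mul_card_monomialGraph hA0 hB0
  calc (K ^ 7 * #A) ^ 2 = K ^ 14 * (#A * #A) := by ring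
    _ ≤ K ^ 14 * (#A * (K * #B)) := by gcongr
    _ = K ^ 15 * (#A * #B) := by ring
    _ ≤ K ^ 15 * (3 * #(monomialGraph A B)) := by gcongr
    _ ≤ K ^ 15 * (K ^ 2 * #(monomialGraph A B)) := by
      gcongr
      nlinarith
    _ = _ := by ring

lemma exists_subset_sq_mul_card_sub_self_le (hA : A.Nonempty) (hB : B.Nonempty) (hA0 : 0 ∉ A)
    (hB0 : 0 ∉ B) (hK : 2 ≤ K) (hKA : #(A * B) ≤ K * #A) (hKB : #(A * B) ≤ K * #B)
    (hf : #(image₂ (fun x y => x * y * (x + y)) A B) ≤ K * #A) :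
    ∃ D ⊆ A ^ 2 * B, #A ≤ K ^ 12 * #D ∧ #(D - D) ≤ K ^ 102 * #A := by
  have hK0 : 0 < K := by linarith
  have hX : #((monomialGraph A B).image Prod.fst) ≤ K ^ 7 * #A :=
    (Nat.cast_le.2 (card_le_card image_fst_monomialGraph_subset)).trans
      (by simpa only [pow_one] using card_pow_mul_pow_le₀ hA hB hA0 hB0 hKA hKB 2 1)
  have hY : #((monomialGraph A B).image Prod.snd) ≤ K ^ 7 * #A :=
    (Nat.cast_le.2 (card_le_card image_snd_monomialGraph_subset)).trans
      (by simpa only [pow_one] using card_pow_mul_pow_le₀ hA hB hA0 hB0 hKA hKB 1 2)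
  have hT : #((monomialGraph A B).image fun e => e.1 + e.2) ≤ K ^ 7 * #A :=
    calc _ ≤ (#(image₂ (fun x y => x * y * (x + y)) A B) : ℝ) :=
          Nat.cast_le.2 (card_le_card image_add_monomialGraph_subset)
      _ ≤ K * #A := hf
      _ ≤ K ^ 7 * #A := by
        gcongr
        exact le_self_pow₀ (by linarith) (by norm_num)
  have hAB : #A ≤ K * #B := by
    obtain ⟨b, hb⟩ := hB
    exact (Nat.cast_le.2 (card_le_card_mul_right₀ hb (ne_of_mem_of_not_mem hb hB0))).trans hKB
  obtain ⟨D, hD, hD_large, hD_sub⟩ := balog_szemeredi_gowers (monomialGraph A B) (by positivity)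
    (by positivity) hX hY hT (sq_le_mul_card_monomialGraph hA0 hB0 hK hAB)
  refine ⟨D, hD.trans image_fst_monomialGraph_subset, ?_, ?_⟩
  · refine le_of_mul_le_mul_left ?_ (pow_pos hK0 7)
    calc K ^ 7 * #A ≤ 2 ^ 2 * K ^ 17 * #D := by norm_num1; exact hD_large
      _ ≤ K ^ 2 * K ^ 17 * #D := by gcongr
      _ = _ := by ring
  · calc (#(D - D) : ℝ) ≤ 2 ^ 10 * (K ^ 17) ^ 5 * (K ^ 7 * #A) := by norm_num1; exact hD_sub
      _ ≤ K ^ 10 * (K ^ 17) ^ 5 * (K ^ 7 * #A) := by gcongr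
      _ = _ := by ring

lemma exists_card_mul_self_le_card_sub_self_le (hA : A.Nonempty) (hB : B.Nonempty) (hA0 : 0 ∉ A)
    (hB0 : 0 ∉ B) (hK : 2 ≤ K) (hKA : #(A * B) ≤ K * #A) (hKB : #(A * B) ≤ K * #B)
    (hf : #(image₂ (fun x y => x * y * (x + y)) A B) ≤ K * #A) :
    ∃ D : Finset F, D.Nonempty ∧ 0 ∉ D ∧ #A ≤ K ^ 12 * #D ∧ #D ≤ K ^ 7 * #A ∧
      #(D * D) ≤ K ^ 22 * #D ∧ #(D - D) ≤ K ^ 114 * #D := by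
  obtain ⟨D, hD, hAD, hD_sub⟩ :=
    exists_subset_sq_mul_card_sub_self_le hA hB hA0 hB0 hK hKA hKB hf
  have hD_ne : D.Nonempty := by
    by_contra! h
    rw [h, card_empty, Nat.cast_zero, mul_zero] at hAD
    exact hA.card_pos.not_ge (by exact_mod_cast hAD)
  have hD0 : 0 ∉ D := by
    intro h
    obtain ⟨x, hx, y, hy, hxy⟩ := mem_mul.1 (hD h)
    rw [sq] at hx
    obtain ⟨x₁, hx₁, x₂, hx₂, rfl⟩ := mem_mul.1 hx
    exact mul_ne_zero (mul_ne_zero (ne_of_mem_of_not_mem hx₁ hA0) (ne_of_mem_of_not_mem hx₂ hA0))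
      (ne_of_mem_of_not_mem hy hB0) hxy
  have hDA : #D ≤ K ^ 7 * #A := (Nat.cast_le.2 (card_le_card hD)).trans
    (by simpa only [pow_one] using card_pow_mul_pow_le₀ hA hB hA0 hB0 hKA hKB 2 1)
  have hDD : D * D ⊆ A ^ 4 * B ^ 2 := by
    refine (mul_subset_mul hD hD).trans_eq ?_
    rw [mul_mul_mul_comm, ← pow_add, ← sq]
  refine ⟨D, hD_ne, hD0, hAD, hDA, ?_, ?_⟩
  · calc (#(D * D) : ℝ) ≤ #(A ^ 4 * B ^ 2) := Nat.cast_le.2 (card_le_card hDD)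
      _ ≤ K ^ 10 * #A := card_pow_mul_pow_le₀ hA hB hA0 hB0 hKA hKB 4 2
      _ ≤ K ^ 10 * (K ^ 12 * #D) := by gcongr
      _ = _ := by ring
  · calc (#(D - D) : ℝ) ≤ K ^ 102 * (K ^ 12 * #D) := hD_sub.trans (by gcongr)
      _ = _ := by ring

lemma card_le_pow_of_card_mul_le_of_card_image₂_le (hA : A.Nonempty) (hB : B.Nonempty)
    (hA0 : 0 ∉ A) (hB0 : 0 ∉ B) (hK : 2 ≤ K) (hKA : #(A * B) ≤ K * #A) (hKB : #(A * B) ≤ K * #B)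
    (hf : #(image₂ (fun x y => x * y * (x + y)) A B) ≤ K * #A) {N : ℕ}
    (hN : Set.InjOn (Nat.cast : ℕ → F) (Set.Iic N)) (hAN : (#A : ℝ) ^ 2 ≤ K * N) :
    #A ≤ K ^ 1592 := by
  have hK1 : 1 ≤ K := by linarith
  obtain ⟨D, hD, hD0, hAD, hDA, hmul, hsub⟩ :=
    exists_card_mul_self_le_card_sub_self_le hA hB hA0 hB0 hK hKA hKB hf
  have hDN : (#D : ℝ) ^ 2 ≤ K ^ 15 * N :=
    calc (#D : ℝ) ^ 2 ≤ (K ^ 7 * #A) ^ 2 := by gcongr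
      _ = K ^ 14 * #A ^ 2 := by ring
      _ ≤ K ^ 14 * (K * N) := by gcongr
      _ = _ := by ring
  have hone_add : 1 + K ^ 15 ≤ K ^ 16 := by nlinarith [one_le_pow₀ hK1 (n := 15)]
  calc (#A : ℝ) ≤ K ^ 12 * #D := hAD
    _ ≤ K ^ 12 * (2 ^ 20 * (1 + K ^ 15) * (K ^ 22) ^ 8 * (K ^ 114) ^ 12) := by
      gcongr
      exact card_le_of_card_mul_self_le_of_card_sub_self_le hD hD0 hN hmul hsub hDN
    _ ≤ K ^ 12 * (K ^ 20 * K ^ 16 * (K ^ 22) ^ 8 * (K ^ 114) ^ 12) := by gcongr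
    _ = K ^ 1592 := by simp only [← pow_mul, ← pow_add]

end SmallCubicImage

end BinaryCubic

lemma exists_natCast_injOn_Iic_le_two_mul {R : Type*} [NonAssocRing R] [Nontrivial R] (p : ℕ)
    [CharP R p] {c x : ℝ} (hc : 1 ≤ c) (hx : p ≠ 0 → x ≤ c * p) :
    ∃ N : ℕ, Set.InjOn (Nat.cast : ℕ → R) (Set.Iic N) ∧ x ≤ 2 * c * N := by
  rcases eq_or_ne p 0 with rfl | hp
  · have : CharZero R := CharP.charP_to_charZero R
    refine ⟨⌈x⌉₊, Nat.cast_injective.injOn, (Nat.le_ceil x).trans ?_⟩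
    exact le_mul_of_one_le_left (Nat.cast_nonneg _) (by linarith)
  · obtain ⟨n, rfl⟩ : ∃ n, p = n + 2 :=
      Nat.exists_eq_add_of_le' ((Nat.two_le_iff p).2 ⟨hp, CharP.char_ne_one R p⟩)
    refine ⟨n + 1, (CharP.natCast_injOn_Iio R (n + 2)).mono fun _ => Nat.lt_succ_of_le,
      (hx hp).trans ?_⟩
    push_cast
    nlinarith [n.cast_nonneg (α := ℝ)]

lemma inv_mul_rpow_one_add_one_div_le {c x m : ℝ} (hc : 0 < c) (hx : 0 < x) (hm : 0 ≤ m) {n : ℕ}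
    (hn : n ≠ 0) (h : x ≤ (c * (m / x)) ^ n) : c⁻¹ * x ^ (1 + 1 / n : ℝ) ≤ m := by
  have hroot : x ^ (1 / n : ℝ) ≤ c * (m / x) := by
    rw [one_div]
    rw [Real.rpow_inv_le_iff_of_pos hx.le (by positivity) (by positivity), Real.rpow_natCast]
    exact h
  calc c⁻¹ * x ^ (1 + 1 / n : ℝ) = c⁻¹ * (x * x ^ (1 / n : ℝ)) := by
        rw [Real.rpow_add hx, Real.rpow_one]
    _ ≤ c⁻¹ * (x * (c * (m / x))) := by gcongr
    _ = m := by field_simp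

theorem stmt_16_general {F : Type*} [Field F] [DecidableEq F] (p : ℕ) [CharP F p] {c : ℝ}
    (hc : 1 ≤ c) {A B : Finset F} (hA0 : 0 ∉ A) (hB0 : 0 ∉ B)
    (hp : p ≠ 0 → (#A : ℝ) ^ 2 ≤ c * p) (hAB : #A ≤ c * #B) :
    (2 * c)⁻¹ * (#A : ℝ) ^ (1 + 1 / 1592 : ℝ) ≤
      max (#(image₂ (fun x y => x * y * (x + y)) A B) : ℝ) #(A * B) := by
  set m : ℝ := max (#(image₂ (fun x y => x * y * (x + y)) A B) : ℝ) #(A * B)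
  have hc0 : 0 < c := by linarith
  rcases A.eq_empty_or_nonempty with hA | hA
  · rw [hA, card_empty, Nat.cast_zero, Real.zero_rpow (by norm_num), mul_zero]
    positivity
  have hA_pos : (0 : ℝ) < #A := by exact_mod_cast hA.card_pos
  have hB : B.Nonempty := by
    by_contra! h
    rw [h, card_empty, Nat.cast_zero, mul_zero] at hAB
    exact hAB.not_gt hA_pos
  have hAm : #A ≤ m := by
    obtain ⟨b, hb⟩ := hB
    exact (Nat.cast_le.2 (card_le_card_mul_right₀ hb (ne_of_mem_of_not_mem hb hB0))).trans
      (le_max_right _ _)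
  set K := 2 * c * (m / #A)
  have hcK : 2 * c ≤ K := le_mul_of_one_le_right (by positivity) ((one_le_div hA_pos).2 hAm)
  have hKA : K * #A = 2 * c * m := by simp only [K]; field_simp
  have hmA : m ≤ K * #A := by nlinarith
  have hmB : m ≤ K * #B := by nlinarith
  obtain ⟨N, hN, hAN⟩ := exists_natCast_injOn_Iic_le_two_mul (R := F) p hc hp
  have hbound : #A ≤ K ^ 1592 := card_le_pow_of_card_mul_le_of_card_image₂_le hA hB hA0 hB0
    (by linarith) ((le_max_right _ _).trans hmA) ((le_max_right _ _).trans hmB)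
    ((le_max_left _ _).trans hmA) hN (hAN.trans (by gcongr))
  exact_mod_cast inv_mul_rpow_one_add_one_div_le (by positivity) hA_pos (hA_pos.le.trans hAm)
    (by norm_num) hbound

lemma sq_le_of_le_rpow_half_sub {x y ε : ℝ} (hx : 0 ≤ x) (hy : 1 ≤ y) (hε : 0 ≤ ε)
    (h : x ≤ y ^ (1 / 2 - ε)) : x ^ 2 ≤ y := by
  refine (Real.le_sqrt hx (by linarith)).1 ?_
  rw [Real.sqrt_eq_rpow]
  exact h.trans (Real.rpow_le_rpow_of_exponent_le hy (sub_le_self _ hε))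

end

/-- Theorem 8: for all `0 < c₁ < c₂` there are `θ > 0` and `κ > 0` such that for every
prime `p` and all nonempty `A, B ⊆ 𝔽_p^*` with `|A|, |B| ≤ p^{1/2 − 1/400}` and
`c₁|B| ≤ |A| ≤ c₂|B|`, with `f(x,y) = xy(x+y)` one has
`max(|f(A,B)|, |A·B|) ≥ κ·|A|^{1+θ}`. -/
theorem stmt_16 (c₁ c₂ : ℝ) (hc₁ : 0 < c₁) (hc₁₂ : c₁ < c₂) :
    ∃ θ : ℝ, 0 < θ ∧ ∃ κ : ℝ, 0 < κ ∧ ∀ (p : ℕ), p.Prime →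
    ∀ A B : Finset (ZMod p), A.Nonempty → B.Nonempty →
      (∀ a ∈ A, a ≠ 0) → (∀ b ∈ B, b ≠ 0) →
      (A.card : ℝ) ≤ (p : ℝ) ^ ((1 : ℝ) / 2 - 1 / 400) →
      (B.card : ℝ) ≤ (p : ℝ) ^ ((1 : ℝ) / 2 - 1 / 400) →
      c₁ * (B.card : ℝ) ≤ (A.card : ℝ) → (A.card : ℝ) ≤ c₂ * (B.card : ℝ) →
      max ((Finset.image₂ (fun x y => x * y * (x + y)) A B).card : ℝ) ((A * B).card : ℝ) ≥
        κ * (A.card : ℝ) ^ ((1 : ℝ) + θ) := by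
  have hc : 1 ≤ max 1 c₂ := le_max_left 1 c₂
  refine ⟨1 / 1592, by norm_num, (2 * max 1 c₂)⁻¹, by positivity, ?_⟩
  intro p hp A B _ _ hA0 hB0 hAp _ _ hAB
  have : Fact p.Prime := ⟨hp⟩
  have hA_sq : (A.card : ℝ) ^ 2 ≤ p :=
    sq_le_of_le_rpow_half_sub (by positivity) (by exact_mod_cast hp.one_le) (by norm_num) hAp
  exact stmt_16_general p hc (fun h => hA0 0 h rfl) (fun h => hB0 0 h rfl)
    (fun _ => hA_sq.trans (le_mul_of_one_le_left p.cast_nonneg hc))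
    (hAB.trans (by gcongr; exact le_max_right 1 c₂))
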